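/- arXiv:0903.3868 — 8 statements merged into one kernel-verified Lean document; each statement's English description precedes it below -/
import Mathlib

section
/- B₁ is maximal abelian in A₁: if f ∈ A₁ commutes with every element of B₁, then f ∈ B₁. -/
/-!
The function `g x = diag (x, 0)` lies in `B₁`, since it vanishes at `0`. Comparing the off-diagonal
entries of `f * g = g * f` gives `x * f x i j = 0` for `i ≠ j`, so the off-diagonal entries of `f`
vanish on `(0, 1]`. As `(0, 1]` is dense in `[0, 1]`, continuity makes them vanish at `0` as well.
-/

/- `A = C([0,1], M₂(ℂ))`.  `A₁ = {f : f 0 = !![a,b;b,a]}` and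
`B₁ = {f ∈ A₁ : f x is diagonal for all x}`.  `B₁` is maximal abelian in `A₁`. -/

noncomputable section

abbrev MatAlg : Type := C(unitInterval, Matrix (Fin 2) (Fin 2) ℂ)

def A₁ : Set MatAlg := {f | ∃ a b : ℂ, f 0 = !![a, b; b, a]}

def B₁ : Set MatAlg := {f | f ∈ A₁ ∧ ∀ x, (f x).IsDiag}

/-- The element `x ↦ diag (x, 0)` of `B₁`, whose diagonal entries differ at every `x ≠ 0`. -/
def separatingDiag : MatAlg where
  toFun x := Matrix.diagonal ![((x : ℝ) : ℂ), 0]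
  continuous_toFun := by
    refine Continuous.matrix_diagonal (continuous_pi fun i => ?_)
    fin_cases i
    · exact Complex.continuous_ofReal.comp continuous_subtype_val
    · exact continuous_const

theorem separatingDiag_mem_B₁ : separatingDiag ∈ B₁ := by
  refine ⟨⟨0, 0, ?_⟩, fun x => Matrix.isDiag_diagonal _⟩
  ext i j
  fin_cases i <;> fin_cases j <;> simp [separatingDiag]

/-- `B₁` is maximal abelian in `A₁`: any element of `A₁` commuting with every element
of `B₁` lies in `B₁`. -/
theorem B₁_maximal_abelian_in_A₁ (f : MatAlg) (hf : f ∈ A₁)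
    (hcomm : ∀ g ∈ B₁, f * g = g * f) : f ∈ B₁ := by
  refine ⟨hf, fun x i j hij => ?_⟩
  have hzero : ∀ y ∈ ({0}ᶜ : Set unitInterval), f y i j = 0 := by
    intro y hy
    have hy' : ((y : ℝ) : ℂ) ≠ 0 := by
      rw [Complex.ofReal_ne_zero]
      exact fun h => hy (Subtype.ext h)
    have h := congrFun (congrFun (DFunLike.congr_fun
      (hcomm separatingDiag separatingDiag_mem_B₁) y) i) j
    simp only [ContinuousMap.mul_apply, separatingDiag, ContinuousMap.coe_mk,
      Matrix.mul_diagonal, Matrix.diagonal_mul] at h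
    fin_cases i <;> fin_cases j <;> simp_all
  -- `[0, 1]` has no isolated points, so `{0}ᶜ` is dense.
  have hext : (fun y => f y i j) = fun _ => 0 :=
    Continuous.ext_on (dense_compl_singleton (0 : unitInterval))
      (f.continuous.matrix_elem i j) continuous_const hzero
  exact congrFun hext x
end
end

section
/- The pure state f ↦ a of B₁ (where f(0) = a·I for f ∈ B₁) admits two distinct state extensions to A₁: the linear functionals φ₊(f) = f(0)₁₁ + f(0)₁₂ and φ₋(f) = f(0)₁₁ − f(0)₁₂ are both positive unital linear functionals (states) on A₁, they are distinct, and they agree on B₁ with the character f ↦ f(0)₁₁. In particular B₁ does not have the unique extension property in A₁. -/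
/-! The matrices `[[a, b], [b, a]]` form a commutative ⋆-algebra whose two characters are
`a + b` and `a - b`. Hence `φp` and `φm` are ⋆-homomorphisms on `A₁`, so that
`φ (star f * f) = star (φ f) * φ f ≥ 0`. They differ on the constant flip matrix and agree
on `B₁`, where the off-diagonal entry `(f 0) 0 1` vanishes. -/

/- The pure state `f ↦ f(0)₁₁` of `B₁` has two distinct state extensions to `A₁`:
`φ₊ f = f(0)₁₁ + f(0)₁₂` and `φ₋ f = f(0)₁₁ - f(0)₁₂`.  (Matrix entries are
indexed from `0` in Lean, so `f(0)₁₁ = (f 0) 0 0` and `f(0)₁₂ = (f 0) 0 1`.)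
In particular `B₁` does not have the unique extension property in `A₁`. -/

noncomputable section

open scoped ComplexOrder

/-- `φ₊ f = f(0)₁₁ + f(0)₁₂`. -/
def φp : MatAlg → ℂ := fun f => (f 0) 0 0 + (f 0) 0 1

/-- `φ₋ f = f(0)₁₁ - f(0)₁₂`. -/
def φm : MatAlg → ℂ := fun f => (f 0) 0 0 - (f 0) 0 1

theorem two_state_extensions :
    -- φ₊ and φ₋ are linear on A₁
    (∀ f ∈ A₁, ∀ g ∈ A₁, φp (f + g) = φp f + φp g ∧ φm (f + g) = φm f + φm g) ∧
    (∀ f ∈ A₁, ∀ c : ℂ, φp (c • f) = c * φp f ∧ φm (c • f) = c * φm f) ∧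
    -- φ₊ and φ₋ are unital
    φp 1 = 1 ∧ φm 1 = 1 ∧
    -- φ₊ and φ₋ are positive on A₁
    (∀ f ∈ A₁, 0 ≤ φp (star f * f) ∧ 0 ≤ φm (star f * f)) ∧
    -- φ₊ and φ₋ are distinct (as functionals on A₁)
    (∃ f ∈ A₁, φp f ≠ φm f) ∧
    -- both agree on B₁ with the character f ↦ f(0)₁₁
    (∀ f ∈ B₁, φp f = (f 0) 0 0 ∧ φm f = (f 0) 0 0) := by
  refine ⟨fun f _ g _ => ?_, fun f _ c => ?_, ?_, ?_, ?_, ?_, ?_⟩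
  · simp only [φp, φm, ContinuousMap.add_apply, Matrix.add_apply]
    constructor <;> ring
  · simp only [φp, φm, ContinuousMap.smul_apply, Matrix.smul_apply, smul_eq_mul]
    constructor <;> ring
  · simp [φp]
  · simp [φm]
  · rintro f ⟨a, b, h⟩
    have hp : φp (star f * f) = star (a + b) * (a + b) := by
      simp [φp, h, Matrix.mul_apply, Fin.sum_univ_two, Matrix.star_apply]
      ring
    have hm : φm (star f * f) = star (a - b) * (a - b) := by
      simp [φm, h, Matrix.mul_apply, Fin.sum_univ_two, Matrix.star_apply]
      ring
    rw [hp, hm]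
    exact ⟨star_mul_self_nonneg _, star_mul_self_nonneg _⟩
  · -- The constant flip matrix: `φp` takes the value `1` on it and `φm` the value `-1`.
    refine ⟨ContinuousMap.const _ !![0, 1; 1, 0], ⟨0, 1, rfl⟩, ?_⟩
    norm_num [φp, φm]
  · rintro f ⟨_, hd⟩
    have h01 : (f 0) 0 1 = 0 := hd 0 (by decide)
    simp [φp, φm, h01]
end
end

section
/- B₂ is maximal abelian in A₂: if f ∈ A₂ commutes with every element of B₂, then f ∈ B₂. -/
/-!
Test `f` against the single element `g x = diag(x, 0)` of `B₂`. Comparing the off-diagonal entries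
of `f x * g x = g x * f x` shows that `x` times each off-diagonal entry of `f x` vanishes, so `f x`
is diagonal for `x ≠ 0`. Since `{x | x ≠ 0}` is dense in `[0, 1]`, continuity gives that `f 0` is
diagonal as well.
-/

/- `A₂ = {f : f 0 = !![a,a;a,a]}` and `B₂ = {f ∈ A₂ : f x is diagonal for all x}`
(the diagonal-valued functions vanishing at 0).  `B₂` is maximal abelian in `A₂`. -/

noncomputable section

def A₂ : Set MatAlg := {f | ∃ a : ℂ, f 0 = !![a, a; a, a]}

def B₂ : Set MatAlg := {f | f ∈ A₂ ∧ ∀ x, (f x).IsDiag}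

/-- The test function `x ↦ diag(x, 0)`. -/
def testFun : MatAlg where
  toFun x := !![((x : ℝ) : ℂ), 0; 0, 0]
  continuous_toFun := by
    refine continuous_matrix fun i j => ?_
    fin_cases i <;> fin_cases j <;> simp <;> fun_prop

lemma testFun_mem_B₂ : testFun ∈ B₂ := by
  refine ⟨⟨0, ?_⟩, fun x i j hij => ?_⟩
  · simp [testFun]
  · fin_cases i <;> fin_cases j <;> simp_all [testFun]

lemma offDiag_eq_zero_of_commute {f : MatAlg} (h : f * testFun = testFun * f)
    {x : unitInterval} (hx : x ≠ 0) : f x 0 1 = 0 ∧ f x 1 0 = 0 := by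
  have hx' : (x : ℝ) ≠ 0 := fun h0 => hx (Subtype.ext h0)
  have hm : f x * testFun x = testFun x * f x := DFunLike.congr_fun h x
  have h01 := congrFun (congrFun hm 0) 1
  have h10 := congrFun (congrFun hm 1) 0
  simp [testFun, Matrix.mul_apply, Fin.sum_univ_two, hx'] at h01 h10
  exact ⟨h01, h10⟩

/-- Continuity propagates the vanishing of a matrix entry from `x ≠ 0` to `x = 0`. -/
lemma entry_eq_zero {f : MatAlg} {i j : Fin 2}
    (h : ∀ x : unitInterval, x ≠ 0 → f x i j = 0) (x : unitInterval) : f x i j = 0 := by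
  have hc : Continuous fun y => f y i j := f.continuous.matrix_elem i j
  exact congrFun (hc.ext_on (dense_compl_singleton (0 : unitInterval)) continuous_const
    fun y hy => h y hy) x

/-- `B₂` is maximal abelian in `A₂`: any element of `A₂` commuting with every element
of `B₂` lies in `B₂`. -/
theorem B₂_maximal_abelian_in_A₂ (f : MatAlg) (hf : f ∈ A₂)
    (hcomm : ∀ g ∈ B₂, f * g = g * f) : f ∈ B₂ := by
  have key := hcomm testFun testFun_mem_B₂
  have h01 := entry_eq_zero fun x hx => (offDiag_eq_zero_of_commute key hx).1
  have h10 := entry_eq_zero fun x hx => (offDiag_eq_zero_of_commute key hx).2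
  refine ⟨hf, fun x i j hij => ?_⟩
  fin_cases i <;> fin_cases j
  · exact absurd rfl hij
  · exact h01 x
  · exact h10 x
  · exact absurd rfl hij
end
end

section
/- B₄ is maximal abelian in A₄: if f ∈ A₄ commutes with every element of B₄, then f ∈ B₄. -/
/- `A₄ = {f : f 0 is diagonal}` and `B₄ = {f : f x is diagonal for all x}`.
`B₄` is maximal abelian in `A₄`. -/

noncomputable section

def A₄ : Set MatAlg := {f | (f 0).IsDiag}

def B₄ : Set MatAlg := {f | ∀ x, (f x).IsDiag}

/-- `B₄` is maximal abelian in `A₄`: any element of `A₄` commuting with every element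
of `B₄` lies in `B₄`. -/
theorem B₄_maximal_abelian_in_A₄ (f : MatAlg) (hf : f ∈ A₄)
    (hcomm : ∀ g ∈ B₄, f * g = g * f) : f ∈ B₄ := by
  intro x i j hij
  -- The constant function with value the matrix unit `E₀₀` separates the two coordinates.
  have h := hcomm (ContinuousMap.const _ (Matrix.diagonal ![1, 0]))
    (fun _ => Matrix.isDiag_diagonal _)
  have hx : f x * Matrix.diagonal ![1, 0] = Matrix.diagonal ![1, 0] * f x :=
    DFunLike.congr_fun h x
  have hxij := congrFun (congrFun hx i) j
  rw [Matrix.mul_diagonal, Matrix.diagonal_mul] at hxij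
  fin_cases i <;> fin_cases j <;> simp_all
end
end

section
/- B₃ is maximal abelian in A₃: if f ∈ A₃ commutes with every element of B₃, then f ∈ B₃. -/
/- `A₃ = {f : f 0 is a scalar multiple of the identity}` and
`B₃ = {f ∈ A₃ : f x is diagonal for all x}`.  `B₃` is maximal abelian in `A₃`. -/

noncomputable section

def A₃ : Set MatAlg := {f | ∃ a : ℂ, f 0 = a • (1 : Matrix (Fin 2) (Fin 2) ℂ)}

def B₃ : Set MatAlg := {f | f ∈ A₃ ∧ ∀ x, (f x).IsDiag}

/-- The element `x ↦ diag(x, 0)`. It vanishes at `0`, so it belongs to `B₃`, and it has distinct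
diagonal entries at every `x ≠ 0`, so commuting with it forces diagonality there. -/
def diagId : MatAlg where
  toFun x := Matrix.diagonal ![((x : ℝ) : ℂ), 0]
  continuous_toFun := by
    refine Continuous.matrix_diagonal (continuous_pi fun i => ?_)
    fin_cases i
    · exact Complex.continuous_ofReal.comp continuous_subtype_val
    · exact continuous_const

lemma diagId_mem : diagId ∈ B₃ := by
  refine ⟨⟨0, ?_⟩, fun x => Matrix.isDiag_diagonal _⟩
  ext i j
  fin_cases i <;> fin_cases j <;> simp [diagId]

/-- `B₃` is maximal abelian in `A₃`: any element of `A₃` commuting with every element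
of `B₃` lies in `B₃`. -/
theorem B₃_maximal_abelian_in_A₃ (f : MatAlg) (hf : f ∈ A₃)
    (hcomm : ∀ g ∈ B₃, f * g = g * f) : f ∈ B₃ := by
  refine ⟨hf, fun x => ?_⟩
  by_cases hx : x = 0
  · -- At `0` the test function vanishes; there `f 0` is scalar by membership in `A₃`.
    obtain ⟨a, ha⟩ := hf
    rw [hx, ha]
    exact Matrix.isDiag_one.smul a
  · have hx' : ((x : ℝ) : ℂ) ≠ 0 := by
      simpa using hx
    have h : f x * diagId x = diagId x * f x := DFunLike.congr_fun (hcomm _ diagId_mem) x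
    have h01 := congrFun (congrFun h 0) 1
    have h10 := congrFun (congrFun h 1) 0
    simp [diagId, Matrix.mul_diagonal, Matrix.diagonal_mul, hx] at h01 h10
    intro i j hij
    fin_cases i <;> fin_cases j <;> simp_all
end
end

section
/- Let X be a topological space and let g₁, g₂ be homeomorphisms of X. Let K₁, K₂ be closed subsets of X with K₁ ∪ K₂ = X, and suppose that for every nonzero integer n, the fixed-point set of gᵢⁿ equals Kᵢ (i = 1, 2). Then for every x ∉ K₁ ∩ K₂ and every pair of integers (m, n): if (g₁ᵐ ∘ g₂ⁿ)(x) = x, then g₁ᵐ ∘ g₂ⁿ agrees with the identity on a neighborhood of x. In other words, in the groupoid of germs of the ℤ²-action generated by g₁ and g₂, the only points with nontrivial isotropy lie in K₁ ∩ K₂. -/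
/-!
Every power of `gᵢ` fixes `Kᵢ` pointwise. If `x ∉ K₂`, then the open neighborhood `K₂ᶜ` of `x` lies
in `K₁`, where `g₁ ^ m` is the identity; so `g₁ ^ m ∘ g₂ ^ n` fixing `x` forces `g₂ ^ n` to fix
`x ∉ K₂`, whence `n = 0` and the composition is the identity on all of `K₂ᶜ`. The case `x ∉ K₁` is
symmetric.
-/

/- Skandalis-type example: `g₁, g₂` homeomorphisms of `X`, `K₁, K₂` closed sets
covering `X` with `Fix(gᵢⁿ) = Kᵢ` for every nonzero integer `n`.  Then at any point
outside `K₁ ∩ K₂`, every element `g₁^m ∘ g₂^n` of the ℤ²-action fixing the point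
agrees with the identity on a neighborhood of it: the only points with nontrivial
isotropy in the groupoid of germs lie in `K₁ ∩ K₂`.  (Integer powers `g ^ n` are
taken in the permutation group, i.e. `n`-fold iterates of `g`, resp. of `g⁻¹` for
negative `n`.) -/

open scoped Topology

theorem trivial_isotropy_off_intersection {X : Type*} [TopologicalSpace X]
    (g₁ g₂ : X ≃ₜ X) (K₁ K₂ : Set X) (hK₁ : IsClosed K₁) (hK₂ : IsClosed K₂)
    (hcover : K₁ ∪ K₂ = Set.univ)
    (hfix₁ : ∀ n : ℤ, n ≠ 0 → {x | (g₁.toEquiv ^ n) x = x} = K₁)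
    (hfix₂ : ∀ n : ℤ, n ≠ 0 → {x | (g₂.toEquiv ^ n) x = x} = K₂) :
    ∀ x ∉ K₁ ∩ K₂, ∀ m n : ℤ, (g₁.toEquiv ^ m) ((g₂.toEquiv ^ n) x) = x →
      ∃ U ∈ 𝓝 x, ∀ y ∈ U, (g₁.toEquiv ^ m) ((g₂.toEquiv ^ n) y) = y := by
  intro x hx m n h
  have fix₁ : ∀ k : ℤ, ∀ y ∈ K₁, (g₁.toEquiv ^ k) y = y := by
    intro k y hy
    by_cases hk : k = 0
    · simp [hk]
    · rw [← hfix₁ k hk] at hy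
      exact hy
  have fix₂ : ∀ k : ℤ, ∀ y ∈ K₂, (g₂.toEquiv ^ k) y = y := by
    intro k y hy
    by_cases hk : k = 0
    · simp [hk]
    · rw [← hfix₂ k hk] at hy
      exact hy
  have cover : ∀ y, y ∈ K₁ ∨ y ∈ K₂ := fun y => by
    have : y ∈ K₁ ∪ K₂ := hcover ▸ Set.mem_univ y
    exact this
  by_cases hx₂ : x ∈ K₂
  · have hx₁ : x ∉ K₁ := fun hx₁ => hx ⟨hx₁, hx₂⟩
    have hm : m = 0 := by
      by_contra hm
      rw [fix₂ n x hx₂] at h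
      exact hx₁ (hfix₁ m hm ▸ h)
    refine ⟨K₁ᶜ, hK₁.isOpen_compl.mem_nhds hx₁, fun y hy => ?_⟩
    rw [fix₂ n y ((cover y).resolve_left hy), hm]
    simp
  · have hx₁ : x ∈ K₁ := (cover x).resolve_right hx₂
    have hn : n = 0 := by
      by_contra hn
      -- Cancel `g₁ ^ m`, using that it also sends `x` to `x`.
      have h' : (g₂.toEquiv ^ n) x = x :=
        (g₁.toEquiv ^ m).injective (h.trans (fix₁ m x hx₁).symm)
      exact hx₂ (hfix₂ n hn ▸ h')
    refine ⟨K₂ᶜ, hK₂.isOpen_compl.mem_nhds hx₂, fun y hy => ?_⟩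
    rw [hn]
    simpa using fix₁ m y ((cover y).resolve_right hy)
end

section
/- Let Z be a Hausdorff topological space and let z : ℕ → Z be an injective sequence. Define the equivalence relation on X = Z × ℕ by (w, i) ~ (w′, j) iff w = w′ and, in case w = z(i) or w = z(j), additionally i = j; let Y = X/~ with the quotient topology and q : X → Y the quotient map. Then for every w ∈ Z with w ∉ range(z) and every i ∈ ℕ, the point q(w, i) is a Hausdorff point of Y: for every y ∈ Y with y ≠ q(w, i) there exist disjoint open subsets of Y containing q(w, i) and y respectively. -/
/-! The first coordinate descends to a continuous map `Y → Z`. Its fibre over a point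
`w ∉ range z` is a single point, so any `y ≠ q (w, i)` lies over some `v ≠ w`, and preimages of
disjoint neighbourhoods of `w` and `v` in the Hausdorff space `Z` separate the two points. -/

/- Glue countably many copies of a Hausdorff space `Z` along the complements of the
points `z i`:  on `X = Z × ℕ`, set `(w, i) ~ (w', j)` iff `w = w'` and, if `w = z i`
or `w = z j`, additionally `i = j`; let `Y = X/~` with the quotient topology.
Every point `q (w, i)` with `w ∉ range z` is a Hausdorff point of `Y`. -/

/-- The gluing relation on `Z × ℕ`. -/
def glueRel {Z : Type*} (z : ℕ → Z) (p q : Z × ℕ) : Prop :=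
  p.1 = q.1 ∧ ((p.1 = z p.2 ∨ p.1 = z q.2) → p.2 = q.2)

/-- The projection `Y → Z`, `q (w, i) ↦ w`, induced on the quotient by the first coordinate. -/
def glueProj {Z : Type*} (z : ℕ → Z) : Quot (glueRel z) → Z :=
  Quot.lift Prod.fst fun _ _ h => h.1

theorem hausdorff_points_of_glued_space {Z : Type*} [TopologicalSpace Z] [T2Space Z]
    (z : ℕ → Z) (hz : Function.Injective z) (w : Z) (hw : w ∉ Set.range z) (i : ℕ) :
    ∀ y : Quot (glueRel z), y ≠ Quot.mk (glueRel z) (w, i) →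
      ∃ U V : Set (Quot (glueRel z)), IsOpen U ∧ IsOpen V ∧
        Quot.mk (glueRel z) (w, i) ∈ U ∧ y ∈ V ∧ Disjoint U V := by
  intro y hy
  have hcont : Continuous (glueProj z) :=
    continuous_quot_lift _ continuous_fst
  induction y using Quot.ind with
  | mk p =>
    obtain ⟨v, j⟩ := p
    have hvw : w ≠ v := by
      rintro rfl
      -- over `w ∉ range z` all copies are identified, so the fibre of the projection is one point
      refine hy (Quot.sound ⟨rfl, ?_⟩)
      rintro (h | h)
      · exact absurd ⟨_, h.symm⟩ hw
      · exact absurd ⟨_, h.symm⟩ hw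
    obtain ⟨U, V, hU, hV, hwU, hvV, hUV⟩ := t2_separation hvw
    exact ⟨glueProj z ⁻¹' U, glueProj z ⁻¹' V, hU.preimage hcont, hV.preimage hcont,
      hwU, hvV, hUV.preimage _⟩
end

section
/- Let Z be a Hausdorff topological space and let z : ℕ → Z be an injective sequence such that the range of z is dense in Z and no point z(k) is isolated in Z. Define the equivalence relation on X = Z × ℕ by (w, i) ~ (w′, j) iff w = w′ and, in case w = z(i) or w = z(j), additionally i = j; let Y = X/~ with the quotient topology. Then the set of Hausdorff points of Y has empty interior: every nonempty open subset of Y contains a point which cannot be separated by disjoint open sets from some other point of Y. -/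
theorem continuous_glue_chart {Z : Type*} [TopologicalSpace Z] (z : ℕ → Z) (i : ℕ) :
    Continuous (fun w : Z => Quot.mk (glueRel z) (w, i)) :=
  continuous_quot_mk.comp (by fun_prop)

/-- The property of being the representative `(z k, k)` is invariant under the gluing relation,
so it descends to the quotient and singles out the class of `(z k, k)`. -/
theorem glue_mk_ne {Z : Type*} (z : ℕ → Z) {k j : ℕ} (hj : j ≠ k) :
    Quot.mk (glueRel z) (z k, j) ≠ Quot.mk (glueRel z) (z k, k) := by
  intro h
  let f : Quot (glueRel z) → Prop := Quot.lift (fun q => q.1 = z k ∧ q.2 = k) (by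
    rintro ⟨a, m⟩ ⟨b, n⟩ ⟨hab, hmn⟩
    dsimp only at hab hmn ⊢
    subst hab
    refine propext ⟨?_, ?_⟩
    · rintro ⟨rfl, rfl⟩
      exact ⟨rfl, (hmn (Or.inl rfl)).symm⟩
    · rintro ⟨rfl, rfl⟩
      exact ⟨rfl, hmn (Or.inr rfl)⟩)
  have hf : f (Quot.mk _ (z k, j)) := by
    rw [h]
    exact ⟨rfl, rfl⟩
  exact hj hf.2

theorem glue_not_separated {Z : Type*} [TopologicalSpace Z] [T2Space Z]
    (z : ℕ → Z) (hz : Function.Injective z) {k j : ℕ} (hk : ¬ IsOpen ({z k} : Set Z))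
    (hj : j ≠ k) {V W : Set (Quot (glueRel z))} (hV : IsOpen V) (hW : IsOpen W)
    (hkV : Quot.mk (glueRel z) (z k, j) ∈ V) (hkW : Quot.mk (glueRel z) (z k, k) ∈ W) :
    ¬ Disjoint V W := by
  intro hd
  apply hk
  -- Disjointness would make `{z k}` the open set of common points of the two pullbacks off `z j`.
  have ho := ((hV.preimage (continuous_glue_chart z j)).inter
    (hW.preimage (continuous_glue_chart z k))).inter (isOpen_compl_singleton (x := z j))
  convert ho using 1
  ext w
  constructor
  · rintro rfl
    exact ⟨⟨hkV, hkW⟩, fun h => hj (hz h).symm⟩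
  · rintro ⟨⟨hwV, hwW⟩, hwj⟩
    by_contra hwk
    have hglue : Quot.mk (glueRel z) (w, j) = Quot.mk (glueRel z) (w, k) :=
      Quot.sound ⟨rfl, fun h => (h.elim hwj hwk).elim⟩
    exact Set.disjoint_left.mp hd hwV (hglue.symm ▸ hwW : Quot.mk (glueRel z) (w, j) ∈ W)

theorem hausdorff_points_empty_interior {Z : Type*} [TopologicalSpace Z] [T2Space Z]
    (z : ℕ → Z) (hz : Function.Injective z) (hdense : DenseRange z)
    (hnotisolated : ∀ k, ¬ IsOpen ({z k} : Set Z)) :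
    ∀ U : Set (Quot (glueRel z)), IsOpen U → U.Nonempty →
      ∃ p ∈ U, ∃ y : Quot (glueRel z), y ≠ p ∧
        ¬ ∃ V W : Set (Quot (glueRel z)), IsOpen V ∧ IsOpen W ∧
          p ∈ V ∧ y ∈ W ∧ Disjoint V W := by
  rintro U hU ⟨p, hp⟩
  induction p using Quot.ind with | mk p =>
  obtain ⟨w, i⟩ := p
  obtain ⟨k, hk⟩ := hdense.exists_mem_open (hU.preimage (continuous_glue_chart z i)) ⟨w, hp⟩
  refine ⟨_, hk, ?_⟩
  by_cases hik : i = k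
  · subst hik
    refine ⟨Quot.mk _ (z i, i + 1), glue_mk_ne z (Nat.succ_ne_self i), ?_⟩
    rintro ⟨V, W, hV, hW, hpV, hyW, hd⟩
    exact glue_not_separated z hz (hnotisolated i) (Nat.succ_ne_self i) hW hV hyW hpV hd.symm
  · refine ⟨Quot.mk _ (z k, k), (glue_mk_ne z hik).symm, ?_⟩
    rintro ⟨V, W, hV, hW, hpV, hyW, hd⟩
    exact glue_not_separated z hz (hnotisolated k) hik hV hW hpV hyW hd
end
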